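/- For every γ ∈ (0,1) there exist constants c, c', c₀ > 0 and n₀ (depending only on γ) such that for all integers 1 ≤ k < n with n ≥ n₀, there exists a pair of finitely supported random variables U, U' taking values in [0,1) satisfying: (i) Pr[U ≠ 1/n] ≤ γ·k/n; (ii) Pr[U' = 0] > 1/3 and Pr[U' = 2/n] > 1/3; (iii) almost surely U ≤ c'·(log n)²/√(kn) and U' ≤ c'·(log n)²/√(kn); (iv) E[U] = E[U'] and |E[U] − 1/n| ≤ c₀·√(k/n)/n; (v) E[U^t] = E[U'^t] for every integer 1 ≤ t ≤ c·log n. -/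

import Mathlib

open MeasureTheory

/-!
A signed measure annihilating all polynomials of low degree splits into its positive and negative
parts, which after normalisation are two probability measures with the same low moments. Divided
differences, whose coefficients are the nodal weights `∏ (vᵢ - vⱼ)⁻¹` of Lagrange interpolation,
provide such signed measures: over `m` nodes they annihilate all polynomials of degree `< m - 1`.

Take the nodes `0, 1, 2` together with `A, 4A, 9A, …, N²A`, and scale the weights so that `1` has
weight `1`. The second difference at `0, 1, 2` has weights proportional to `-1/2, 1, -1/2`, and a
large `A` perturbs it only slightly. The far nodes `w` get weight `O(w⁻²)`, because squares are
spread out enough for the products `∏ l² / |j² - l²|` to stay bounded. The positive part is then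
nearly concentrated at `1` and the negative part nearly splits equally between `0` and `2`. Divide
the nodes by `n`, and choose `A` of order `√(n/k)` and `N` of order `log n`.
-/

open Finset Sum Lagrange
open scoped Nat

lemma one_sub_sum_le_prod_one_sub {ι R : Type*} [CommRing R] [LinearOrder R]
    [IsStrictOrderedRing R] (s : Finset ι) {f : ι → R}
    (hf₀ : ∀ i ∈ s, 0 ≤ f i) (hf₁ : ∀ i ∈ s, f i ≤ 1) :
    1 - ∑ i ∈ s, f i ≤ ∏ i ∈ s, (1 - f i) := by
  classical
  induction s using Finset.induction_on with
  | empty => simp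
  | insert a s ha ih =>
    rw [forall_mem_insert] at hf₀ hf₁
    rw [sum_insert ha, prod_insert ha]
    have hsum : 0 ≤ ∑ i ∈ s, f i := sum_nonneg hf₀.2
    nlinarith [mul_le_mul_of_nonneg_left (ih hf₀.2 hf₁.2) (sub_nonneg.2 hf₁.1)]

lemma factorial_sq_le_factorial_mul_factorial {a b n : ℕ} (h : a + b = 2 * n) :
    n ! ^ 2 ≤ a ! * b ! := by
  have hchoose : (2 * n).choose b * a ! * b ! = n.centralBinom * n ! * n ! := by
    rw [← h, Nat.add_choose_mul_factorial_mul_factorial, Nat.centralBinom_eq_two_mul_choose, h,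
      two_mul, Nat.add_choose_mul_factorial_mul_factorial]
  refine Nat.le_of_mul_le_mul_left ?_ n.centralBinom_pos
  calc n.centralBinom * n ! ^ 2 = (2 * n).choose b * (a ! * b !) := by
        rw [← mul_assoc, hchoose]; ring
    _ ≤ n.centralBinom * (a ! * b !) := by gcongr; exact Nat.choose_le_centralBinom b n

lemma prod_Ico_abs_sq_sub_sq (i : ℕ) :
    (∏ l ∈ Ico 1 (i + 1), |((i + 1 : ℕ) : ℝ) ^ 2 - (l : ℝ) ^ 2|) * (i + 1)! =
      i ! * (2 * i + 1)! := by
  have hfactor (k : ℕ) (hk : k ∈ range i) :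
      |((i + 1 : ℕ) : ℝ) ^ 2 - ((1 + k : ℕ) : ℝ) ^ 2| = ((i - k) * (i + 2 + k) : ℕ) := by
    have hki : (k : ℝ) ≤ i := mod_cast (mem_range.1 hk).le
    push_cast [(mem_range.1 hk).le]
    rw [abs_of_nonneg (by nlinarith [(k.cast_nonneg : (0 : ℝ) ≤ k)])]
    ring
  rw [prod_Ico_eq_prod_range, Nat.add_sub_cancel, prod_congr rfl hfactor]
  norm_cast
  rw [prod_mul_distrib, ← Nat.descFactorial_eq_prod_range, ← Nat.ascFactorial_eq_prod_range,
    Nat.descFactorial_self, mul_assoc, mul_comm (Nat.ascFactorial _ _),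
    Nat.factorial_mul_ascFactorial]
  congr 2; ring

lemma prod_Ico_sq (i : ℕ) : ∏ l ∈ Ico 1 (i + 1), (l : ℝ) ^ 2 = (i ! : ℝ) ^ 2 := by
  rw [prod_pow, ← Finset.prod_Ico_id_eq_factorial, Nat.cast_prod]

lemma prod_sq_div_abs_sq_sub_sq_mul {j : ℕ} (hj : 1 ≤ j) (m : ℕ) :
    (∏ l ∈ (Icc 1 (j + m)).erase j, (l : ℝ) ^ 2 / |(j : ℝ) ^ 2 - (l : ℝ) ^ 2|) *
      (m ! * (2 * j + m)!) = 2 * ((j + m)! : ℝ) ^ 2 := by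
  induction m with
  | zero =>
    obtain ⟨i, rfl⟩ : ∃ i, j = i + 1 := ⟨j - 1, by omega⟩
    have hfac : ((2 * (i + 1))! : ℝ) = 2 * (i + 1) * (2 * i + 1)! := by
      rw [mul_add_one, Nat.factorial_succ]; push_cast; ring
    have hprod := prod_Ico_abs_sq_sub_sq i
    have hne : (∏ l ∈ Ico 1 (i + 1), |((i + 1 : ℕ) : ℝ) ^ 2 - (l : ℝ) ^ 2|) ≠ 0 :=
      left_ne_zero_of_mul (hprod.trans_ne (by positivity))
    rw [add_zero, Icc_erase_right, prod_div_distrib, prod_Ico_sq, add_zero, hfac,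
      div_mul_eq_mul_div, div_eq_iff hne]
    rw [Nat.factorial_succ i] at hprod ⊢
    push_cast [Nat.factorial_zero] at hprod ⊢
    linear_combination (-2 * (i + 1) * (i ! : ℝ)) * hprod
  | succ m ih =>
    have hset : (Icc 1 (j + (m + 1))).erase j = insert (j + m + 1) ((Icc 1 (j + m)).erase j) := by
      ext l; simp only [mem_erase, mem_Icc, mem_insert]; omega
    have habs : |(j : ℝ) ^ 2 - ((j + m + 1 : ℕ) : ℝ) ^ 2| = (m + 1) * (2 * j + m + 1) := by
      rw [abs_sub_comm, abs_of_nonneg] <;> push_cast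
      · ring
      · nlinarith [(j.cast_nonneg : (0 : ℝ) ≤ j), (m.cast_nonneg : (0 : ℝ) ≤ m)]
    rw [hset, prod_insert (by simp), habs, ← add_assoc, ← add_assoc, Nat.factorial_succ m,
      Nat.factorial_succ (2 * j + m), Nat.factorial_succ (j + m)]
    push_cast
    field_simp
    linear_combination ih

lemma prod_sq_div_abs_sq_sub_sq_le_two {j N : ℕ} (hj : j ∈ Icc 1 N) :
    ∏ l ∈ (Icc 1 N).erase j, (l : ℝ) ^ 2 / |(j : ℝ) ^ 2 - (l : ℝ) ^ 2| ≤ 2 := by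
  obtain ⟨hj1, hjN⟩ := mem_Icc.1 hj
  obtain ⟨m, rfl⟩ := Nat.exists_eq_add_of_le hjN
  have hfac : ((j + m)! : ℝ) ^ 2 ≤ m ! * (2 * j + m)! :=
    mod_cast factorial_sq_le_factorial_mul_factorial (by ring)
  refine le_of_mul_le_mul_right ?_ (by positivity : (0 : ℝ) < m ! * (2 * j + m)!)
  rw [prod_sq_div_abs_sq_sub_sq_mul hj1]
  gcongr

section NodalWeight

variable {ι κ F : Type*} [DecidableEq ι] [DecidableEq κ] [Field F]

lemma sum_nodalWeight_mul_eval_eq_zero {s : Finset ι} {v : ι → F} (hv : Set.InjOn v s)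
    {P : Polynomial F} (hP : P.natDegree + 1 < #s) :
    ∑ i ∈ s, nodalWeight s v i * P.eval (v i) = 0 := by
  have hcoeff : P.coeff (#s - 1) = 0 := Polynomial.coeff_eq_zero_of_natDegree_lt (by omega)
  have hdegree : P.degree < #s :=
    Polynomial.degree_le_natDegree.trans_lt (Nat.cast_lt.2 (by omega))
  rw [← hcoeff, coeff_eq_sum hv hdegree]
  refine sum_congr rfl fun i _ => ?_
  rw [nodalWeight, prod_inv_distrib, div_eq_inv_mul]

variable [Fintype ι] [Fintype κ]

lemma nodalWeight_sumElim_inl (v : ι → F) (w : κ → F) (i : ι) :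
    nodalWeight univ (Sum.elim v w) (inl i) =
      nodalWeight univ v i * ∏ j, (v i - w j)⁻¹ := by
  have herase : univ.erase (inl i : ι ⊕ κ) = (univ.erase i).disjSum univ := by
    ext (_ | _) <;> simp
  simp only [nodalWeight, herase, prod_disjSum, Sum.elim_inl, Sum.elim_inr]

lemma nodalWeight_sumElim_inr (v : ι → F) (w : κ → F) (j : κ) :
    nodalWeight univ (Sum.elim v w) (inr j) =
      nodalWeight univ w j * ∏ i, (w j - v i)⁻¹ := by
  have herase : univ.erase (inr j : ι ⊕ κ) = univ.disjSum (univ.erase j) := by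
    ext (_ | _) <;> simp
  simp only [nodalWeight, herase, prod_disjSum, Sum.elim_inl, Sum.elim_inr, mul_comm]

lemma nodalWeight_fin_three [CharZero F] :
    nodalWeight univ (fun i : Fin 3 => ((i : ℕ) : F)) = ![1 / 2, -1, 1 / 2] := by
  have herase₀ : (univ : Finset (Fin 3)).erase 0 = {1, 2} := by decide
  have herase₁ : (univ : Finset (Fin 3)).erase 1 = {0, 2} := by decide
  have herase₂ : (univ : Finset (Fin 3)).erase 2 = {0, 1} := by decide
  funext i
  match i with
  | 0 => rw [nodalWeight, herase₀, prod_pair (by decide)]; norm_num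
  | 1 => rw [nodalWeight, herase₁, prod_pair (by decide)]; norm_num
  | 2 =>
    change _ = (1 / 2 : F)
    rw [nodalWeight, herase₂, prod_pair (by decide)]
    norm_num

end NodalWeight

section SignedWeight

variable {κ : Type*}

/-- The nodes `0, 1, 2` followed by the nodes `w`. The outer summand `Fin 3` indexes the three
small nodes by their value. -/
def augmentedNodes (w : κ → ℝ) : Fin 3 ⊕ κ → ℝ := Sum.elim (fun i => ((i : ℕ) : ℝ)) w

lemma augmentedNodes_injective {w : κ → ℝ} (hw : Function.Injective w) (hw₂ : ∀ j, 2 < w j) :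
    Function.Injective (augmentedNodes w) :=
  (Nat.cast_injective.comp Fin.val_injective).sumElim hw fun i j =>
    ((mod_cast Nat.le_of_lt_succ i.2 : ((i : ℕ) : ℝ) ≤ 2).trans_lt (hw₂ j)).ne

variable [Fintype κ] [DecidableEq κ] {w : κ → ℝ}

/-- The coefficients of the divided difference over `augmentedNodes w`, scaled so that the node `1`
gets coefficient `1`. -/
noncomputable def signedWeight (w : κ → ℝ) (i : Fin 3 ⊕ κ) : ℝ :=
  nodalWeight univ (augmentedNodes w) i / nodalWeight univ (augmentedNodes w) (inl 1)

lemma sum_signedWeight_mul_augmentedNodes_pow (hw : Function.Injective w) (hw₂ : ∀ j, 2 < w j)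
    {t : ℕ} (ht : t ≤ Fintype.card κ + 1) : ∑ i, signedWeight w i * augmentedNodes w i ^ t = 0 := by
  have hdegree :
      (Polynomial.X ^ t : Polynomial ℝ).natDegree + 1 < #(univ : Finset (Fin 3 ⊕ κ)) := by
    rw [Polynomial.natDegree_X_pow, card_univ, Fintype.card_sum, Fintype.card_fin]
    omega
  have hsum := sum_nodalWeight_mul_eval_eq_zero (augmentedNodes_injective hw hw₂).injOn hdegree
  simp only [Polynomial.eval_pow, Polynomial.eval_X] at hsum
  simp only [signedWeight, div_mul_eq_mul_div, ← sum_div, hsum, zero_div]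

lemma nodalWeight_augmentedNodes_inl_one (w : κ → ℝ) :
    nodalWeight univ (augmentedNodes w) (inl 1) = -∏ j, (1 - w j)⁻¹ := by
  simp [augmentedNodes, nodalWeight_sumElim_inl, nodalWeight_fin_three]

lemma signedWeight_inl_one (hw : ∀ j, w j ≠ 1) : signedWeight w (inl 1) = 1 := by
  refine div_self ?_
  rw [nodalWeight_augmentedNodes_inl_one]
  exact neg_ne_zero.2 (prod_ne_zero_iff.2 fun j _ => inv_ne_zero (sub_ne_zero.2 (hw j).symm))

lemma signedWeight_inl_zero (hw : ∀ j, w j ≠ 0) :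
    signedWeight w (inl 0) = -(1 / 2) * ∏ j, (1 - (w j)⁻¹) := by
  rw [signedWeight, nodalWeight_augmentedNodes_inl_one, augmentedNodes, nodalWeight_sumElim_inl,
    nodalWeight_fin_three, div_neg, mul_div_assoc, ← prod_div_distrib, neg_mul]
  congr! 3 with j
  have hwj := hw j
  simp only [Fin.val_zero, Nat.cast_zero]
  field_simp
  ring

lemma signedWeight_inl_two (w : κ → ℝ) :
    signedWeight w (inl 2) = -(1 / 2) * ∏ j, ((w j - 1) / (w j - 2)) := by
  rw [signedWeight, nodalWeight_augmentedNodes_inl_one, augmentedNodes, nodalWeight_sumElim_inl,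
    nodalWeight_fin_three, div_neg, mul_div_assoc, ← prod_div_distrib, neg_mul]
  congr! 3 with j
  rw [Fin.val_two, Nat.cast_ofNat, inv_div_inv, ← neg_sub (w j) 1, ← neg_sub (w j) 2,
    neg_div_neg_eq]

lemma signedWeight_inr (w : κ → ℝ) (j : κ) :
    signedWeight w (inr j) =
      -(nodalWeight univ w j * ∏ l, (1 - w l)) / (w j * (w j - 1) * (w j - 2)) := by
  rw [signedWeight, nodalWeight_augmentedNodes_inl_one, augmentedNodes, nodalWeight_sumElim_inr,
    Fin.prod_univ_three, prod_inv_distrib]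
  simp only [Fin.val_zero, Fin.val_one, Fin.val_two, Nat.cast_zero, Nat.cast_one,
    Nat.cast_ofNat, sub_zero]
  field_simp

lemma signedWeight_inl_zero_le (hw : ∀ j, 1 ≤ w j) :
    signedWeight w (inl 0) ≤ -(1 / 2) * (1 - ∑ j, (w j)⁻¹) := by
  have hw0 (j : κ) : 0 < w j := one_pos.trans_le (hw j)
  rw [signedWeight_inl_zero fun j => (hw0 j).ne']
  linarith [one_sub_sum_le_prod_one_sub univ (fun j _ => (inv_pos.2 (hw0 j)).le)
    (fun j _ => inv_le_one_of_one_le₀ (hw j))]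

lemma signedWeight_inl_two_le (hw : ∀ j, 2 < w j) : signedWeight w (inl 2) ≤ -(1 / 2) := by
  have hprod : 1 ≤ ∏ j, ((w j - 1) / (w j - 2)) := Finset.one_le_prod fun j _ => by
    rw [one_le_div (by linarith [hw j])]; linarith
  rw [signedWeight_inl_two]
  linarith

lemma abs_signedWeight_inr_le (hw : ∀ j, 4 ≤ w j) (j : κ) :
    |signedWeight w (inr j)| ≤ 2 / w j ^ 2 * ∏ l ∈ univ.erase j, (w l / |w j - w l|) := by
  have hwj := hw j
  have hprod : |nodalWeight univ w j * ∏ l, (1 - w l)| ≤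
      (w j - 1) * ∏ l ∈ univ.erase j, (w l / |w j - w l|) := by
    rw [← mul_prod_erase univ _ (mem_univ j), mul_left_comm, abs_mul, nodalWeight,
      ← prod_mul_distrib, abs_prod, abs_sub_comm, abs_of_nonneg (by linarith)]
    refine mul_le_mul_of_nonneg_left (prod_le_prod (fun _ _ => abs_nonneg _) fun l _ => ?_)
      (by linarith)
    rw [abs_mul, abs_inv, ← div_eq_inv_mul, abs_sub_comm 1, abs_of_nonneg (by linarith [hw l])]
    gcongr
    linarith
  have hpos : 0 < w j * (w j - 1) * (w j - 2) :=
    mul_pos (mul_pos (by linarith) (by linarith)) (by linarith)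
  rw [signedWeight_inr, abs_div, abs_neg, abs_of_pos hpos, div_le_iff₀ hpos]
  have hprod_nonneg : 0 ≤ ∏ l ∈ univ.erase j, (w l / |w j - w l|) :=
    prod_nonneg fun l _ => div_nonneg (by linarith [hw l]) (abs_nonneg _)
  refine hprod.trans ?_
  calc (w j - 1) * ∏ l ∈ univ.erase j, (w l / |w j - w l|)
      ≤ (2 * (w j - 2) / w j) * (w j - 1) * ∏ l ∈ univ.erase j, (w l / |w j - w l|) := by
        gcongr
        refine le_mul_of_one_le_left (by linarith) ?_
        rw [one_le_div (by linarith)]; linarith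
    _ = _ := by field_simp

end SignedWeight

section PosPart

lemma posPart_le_abs {α : Type*} [AddCommGroup α] [Lattice α] [IsOrderedAddMonoid α] (a : α) :
    a⁺ ≤ |a| :=
  sup_le (le_abs_self a) (abs_nonneg a)

variable {ι : Type*} [Fintype ι]

/-- The positive part of a signed weight, scaled to total mass one; the negative part of `u` is
obtained as `normalizedPosPart (-u)`. It is zero when `u` has no positive value. -/
noncomputable def normalizedPosPart (u : ι → ℝ) (i : ι) : ℝ := (u i)⁺ / ∑ j, (u j)⁺

lemma normalizedPosPart_mem_stdSimplex {u : ι → ℝ} {i : ι} (hi : 0 < u i) :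
    normalizedPosPart u ∈ stdSimplex ℝ ι := by
  have hsum : 0 < ∑ j, (u j)⁺ := sum_pos' (fun j _ => posPart_nonneg _) ⟨i, mem_univ i, by simpa⟩
  exact ⟨fun j => div_nonneg (posPart_nonneg _) hsum.le, by
    simp only [normalizedPosPart, ← sum_div, div_self hsum.ne']⟩

lemma sum_posPart_neg {u : ι → ℝ} (hu : ∑ i, u i = 0) :
    ∑ i, (-u i)⁺ = ∑ i, (u i)⁺ := by
  refine (sub_eq_zero.1 ?_).symm
  simp_rw [posPart_neg, ← sum_sub_distrib, posPart_sub_negPart, hu]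

lemma sum_normalizedPosPart_neg_mul {u f : ι → ℝ} (hu : ∑ i, u i = 0)
    (huf : ∑ i, u i * f i = 0) :
    ∑ i, normalizedPosPart (-u) i * f i = ∑ i, normalizedPosPart u i * f i := by
  simp only [normalizedPosPart, div_mul_eq_mul_div, ← sum_div, Pi.neg_apply, sum_posPart_neg hu]
  congr 1
  refine (sub_eq_zero.1 ?_).symm
  simp_rw [posPart_neg, ← sum_sub_distrib, ← sub_mul, posPart_sub_negPart, huf]

end PosPart

section Splitting

variable {κ : Type*} [Fintype κ] {u : Fin 3 ⊕ κ → ℝ}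

lemma sum_posPart_mul_eq_add_sum_inr (hu₀ : u (inl 0) ≤ 0) (hu₁ : u (inl 1) = 1)
    (hu₂ : u (inl 2) ≤ 0) (f : Fin 3 ⊕ κ → ℝ) :
    ∑ i, (u i)⁺ * f i = f (inl 1) + ∑ j, (u (inr j))⁺ * f (inr j) := by
  rw [Fintype.sum_sum_type, Fin.sum_univ_three, posPart_of_nonpos hu₀, posPart_of_nonpos hu₂, hu₁,
    posPart_of_nonneg zero_le_one]
  ring

lemma sum_posPart_eq_one_add_sum_inr (hu₀ : u (inl 0) ≤ 0) (hu₁ : u (inl 1) = 1)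
    (hu₂ : u (inl 2) ≤ 0) :
    ∑ i, (u i)⁺ = 1 + ∑ j, (u (inr j))⁺ := by
  simpa using sum_posPart_mul_eq_add_sum_inr hu₀ hu₁ hu₂ 1

lemma sum_posPart_le_one_add_sum_abs_inr (hu₀ : u (inl 0) ≤ 0) (hu₁ : u (inl 1) = 1)
    (hu₂ : u (inl 2) ≤ 0) :
    ∑ i, (u i)⁺ ≤ 1 + ∑ j, |u (inr j)| := by
  rw [sum_posPart_eq_one_add_sum_inr hu₀ hu₁ hu₂]
  gcongr with j
  exact posPart_le_abs _

lemma one_le_sum_posPart (hu₁ : u (inl 1) = 1) : 1 ≤ ∑ i, (u i)⁺ := by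
  simpa [hu₁] using single_le_sum (fun i _ => posPart_nonneg (u i)) (mem_univ (inl 1))

lemma one_sub_sum_abs_inr_le_normalizedPosPart (hu₀ : u (inl 0) ≤ 0) (hu₁ : u (inl 1) = 1)
    (hu₂ : u (inl 2) ≤ 0) :
    1 - ∑ j, |u (inr j)| ≤ normalizedPosPart u (inl 1) := by
  have hS := one_le_sum_posPart hu₁
  rw [normalizedPosPart, hu₁, posPart_of_nonneg zero_le_one, le_div_iff₀ (by linarith)]
  nlinarith [sum_posPart_le_one_add_sum_abs_inr hu₀ hu₁ hu₂,
    sum_nonneg fun j (_ : j ∈ univ) => abs_nonneg (u (inr j))]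

lemma abs_sum_normalizedPosPart_mul_augmentedNodes_sub_one_le (hu₀ : u (inl 0) ≤ 0)
    (hu₁ : u (inl 1) = 1) (hu₂ : u (inl 2) ≤ 0) {w : κ → ℝ} (hw : ∀ j, 1 ≤ w j) :
    |∑ i, normalizedPosPart u i * augmentedNodes w i - 1| ≤ ∑ j, |u (inr j)| * w j := by
  have hS := one_le_sum_posPart hu₁
  have hsum : ∑ i, normalizedPosPart u i * augmentedNodes w i - 1 =
      (∑ j, (u (inr j))⁺ * (w j - 1)) / ∑ i, (u i)⁺ := by
    simp only [normalizedPosPart, div_mul_eq_mul_div, ← sum_div]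
    rw [div_sub_one (by linarith), sum_posPart_mul_eq_add_sum_inr hu₀ hu₁ hu₂,
      sum_posPart_eq_one_add_sum_inr hu₀ hu₁ hu₂]
    simp only [augmentedNodes, elim_inl, elim_inr, Fin.val_one, Nat.cast_one,
      add_sub_add_left_eq_sub, mul_sub, mul_one, sum_sub_distrib]
  have hnonneg (j : κ) : 0 ≤ (u (inr j))⁺ * (w j - 1) :=
    mul_nonneg (posPart_nonneg _) (by linarith [hw j])
  rw [hsum, abs_of_nonneg (div_nonneg (sum_nonneg fun j _ => hnonneg j) (by linarith))]
  refine (div_le_self (sum_nonneg fun j _ => hnonneg j) hS).trans (sum_le_sum fun j _ => ?_)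
  exact mul_le_mul (posPart_le_abs _) (by linarith) (by linarith [hw j]) (abs_nonneg _)

lemma lt_normalizedPosPart_neg (hu₀ : u (inl 0) ≤ 0) (hu₁ : u (inl 1) = 1) (hu₂ : u (inl 2) ≤ 0)
    (hu : ∑ i, u i = 0) {c : ℝ} (hc : 0 ≤ c) {i : Fin 3 ⊕ κ}
    (hi : c * (1 + ∑ j, |u (inr j)|) < -u i) :
    c < normalizedPosPart (-u) i := by
  have hS := one_le_sum_posPart hu₁
  simp only [normalizedPosPart, Pi.neg_apply, sum_posPart_neg hu]
  rw [lt_div_iff₀ (by linarith)]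
  grw [sum_posPart_le_one_add_sum_abs_inr hu₀ hu₁ hu₂]
  exact hi.trans_le (le_posPart _)

end Splitting

section SquareNodes

variable {A : ℝ} {N : ℕ}

/-- The far nodes `A, 4A, 9A, …, N²A` of the construction. -/
def squareNodes (A : ℝ) (N : ℕ) (l : Icc 1 N) : ℝ := A * (l : ℕ) ^ 2

lemma le_squareNodes (hA : 0 ≤ A) (l : Icc 1 N) : A ≤ squareNodes A N l :=
  le_mul_of_one_le_right hA <| one_le_pow₀ <| Nat.one_le_cast.2 (mem_Icc.1 l.2).1

lemma squareNodes_le (hA : 0 ≤ A) (l : Icc 1 N) : squareNodes A N l ≤ A * N ^ 2 := by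
  unfold squareNodes
  gcongr
  exact (mem_Icc.1 l.2).2

lemma squareNodes_injective (hA : 0 < A) : Function.Injective (squareNodes A N) := fun l m h => by
  have hsq : ((l : ℕ) : ℝ) ^ 2 = ((m : ℕ) : ℝ) ^ 2 := mul_left_cancel₀ hA.ne' h
  exact Subtype.ext (Nat.pow_left_injective two_ne_zero (mod_cast hsq))

lemma sum_inv_squareNodes_le (hA : 0 ≤ A) : ∑ l, (squareNodes A N l)⁻¹ ≤ 2 / A := by
  have hsum : ∑ l ∈ Icc 1 N, ((l : ℝ) ^ 2)⁻¹ ≤ 2 := by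
    have hIcc : Icc 1 N = Ioo 0 (N + 1) := by ext; simp [Nat.lt_iff_add_one_le]
    rw [hIcc]
    simpa using sum_Ioo_inv_sq_le (α := ℝ) 0 (N + 1)
  calc ∑ l, (squareNodes A N l)⁻¹ = A⁻¹ * ∑ l ∈ Icc 1 N, ((l : ℝ) ^ 2)⁻¹ := by
        simp only [squareNodes, mul_inv, ← mul_sum]
        rw [← sum_coe_sort (Icc 1 N)]
    _ ≤ A⁻¹ * 2 := by gcongr
    _ = 2 / A := by rw [mul_comm, div_eq_mul_inv]

lemma prod_squareNodes_div_abs_sub_le_two (hA : 0 < A) (j : Icc 1 N) :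
    ∏ l ∈ univ.erase j, (squareNodes A N l / |squareNodes A N j - squareNodes A N l|) ≤ 2 := by
  have hmap : ((univ : Finset (Icc 1 N)).erase j).map (.subtype _) = (Icc 1 N).erase j := by
    ext; simp
  refine le_of_eq_of_le ?_ (prod_sq_div_abs_sq_sub_sq_le_two j.2)
  rw [← hmap, prod_map]
  refine prod_congr rfl fun l _ => ?_
  rw [squareNodes, squareNodes, ← mul_sub, abs_mul, abs_of_pos hA, mul_div_mul_left _ _ hA.ne']
  rfl

lemma abs_signedWeight_squareNodes_inr_le (hA : 4 ≤ A) (j : Icc 1 N) :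
    |signedWeight (squareNodes A N) (inr j)| ≤ 4 / squareNodes A N j ^ 2 := by
  have hA0 : 0 < A := by linarith
  calc |signedWeight (squareNodes A N) (inr j)| ≤ 2 / squareNodes A N j ^ 2 * 2 := by
        grw [abs_signedWeight_inr_le (fun l => hA.trans (le_squareNodes hA0.le l)),
          prod_squareNodes_div_abs_sub_le_two hA0]
    _ = 4 / squareNodes A N j ^ 2 := by ring

lemma sum_abs_signedWeight_squareNodes_inr_mul_le (hA : 4 ≤ A) :
    ∑ j, |signedWeight (squareNodes A N) (inr j)| * squareNodes A N j ≤ 8 / A := by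
  have hA0 : 0 < A := by linarith
  calc ∑ j, |signedWeight (squareNodes A N) (inr j)| * squareNodes A N j
      ≤ ∑ j, 4 * (squareNodes A N j)⁻¹ := sum_le_sum fun j _ => by
        have hj := hA0.trans_le (le_squareNodes hA0.le j)
        grw [abs_signedWeight_squareNodes_inr_le hA]
        field_simp
        rfl
    _ ≤ 4 * (2 / A) := by rw [← mul_sum]; grw [sum_inv_squareNodes_le hA0.le]
    _ = 8 / A := by ring

lemma sum_abs_signedWeight_squareNodes_inr_le (hA : 4 ≤ A) :
    ∑ j, |signedWeight (squareNodes A N) (inr j)| ≤ 8 / A ^ 2 := by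
  have hA0 : 0 < A := by linarith
  calc ∑ j, |signedWeight (squareNodes A N) (inr j)|
      ≤ (∑ j, |signedWeight (squareNodes A N) (inr j)| * squareNodes A N j) / A := by
        rw [sum_div]
        gcongr with j
        rw [le_div_iff₀ hA0]
        gcongr
        exact le_squareNodes hA0.le j
    _ ≤ 8 / A / A := by grw [sum_abs_signedWeight_squareNodes_inr_mul_le hA]
    _ = 8 / A ^ 2 := by rw [div_div, sq]

lemma augmentedNodes_squareNodes_mem_Icc (hA : 2 ≤ A) (hN : 1 ≤ N)
    (i : Fin 3 ⊕ Icc 1 N) : augmentedNodes (squareNodes A N) i ∈ Set.Icc 0 (A * N ^ 2) := by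
  obtain i | j := i
  · have hi : ((i : ℕ) : ℝ) ≤ 2 := mod_cast Nat.le_of_lt_succ i.2
    have hN' : (1 : ℝ) ≤ N ^ 2 := one_le_pow₀ (mod_cast hN)
    exact ⟨Nat.cast_nonneg _, by rw [augmentedNodes, elim_inl]; nlinarith⟩
  · have hA0 : 0 ≤ A := by linarith
    exact ⟨hA0.trans (le_squareNodes hA0 j), squareNodes_le hA0 j⟩

end SquareNodes

section PMF

variable {ι : Type*} [Fintype ι]

/-- A point of the standard simplex, viewed as a probability mass function. -/
noncomputable def pmfOfMemStdSimplex {p : ι → ℝ} (hp : p ∈ stdSimplex ℝ ι) : PMF ι :=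
  PMF.ofFintype (fun i => ENNReal.ofReal (p i)) <| by
    rw [← ENNReal.ofReal_sum_of_nonneg fun i _ => hp.1 i, hp.2, ENNReal.ofReal_one]

lemma pmfOfMemStdSimplex_apply {p : ι → ℝ} (hp : p ∈ stdSimplex ℝ ι) (i : ι) :
    pmfOfMemStdSimplex hp i = ENNReal.ofReal (p i) := rfl

lemma integral_pmfOfMemStdSimplex [MeasurableSpace ι] [MeasurableSingletonClass ι]
    {p : ι → ℝ} (hp : p ∈ stdSimplex ℝ ι) (f : ι → ℝ) :
    ∫ i, f i ∂(pmfOfMemStdSimplex hp).toMeasure = ∑ i, p i * f i := by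
  simp [PMF.integral_eq_sum, pmfOfMemStdSimplex_apply, hp.1]

end PMF

section RandomVariables

variable {ι : Type*} [Fintype ι] [MeasurableSpace ι] [MeasurableSingletonClass ι] {p : ι → ℝ}
  {Ω : Type*} [MeasurableSpace Ω] {P : Measure Ω} {X : Ω → ι}

lemma ofReal_le_measure_comp_eq (hp : p ∈ stdSimplex ℝ ι)
    (hX : MeasurePreserving X P (pmfOfMemStdSimplex hp).toMeasure) {α : Type*} (x : ι → α) (i : ι) :
    ENNReal.ofReal (p i) ≤ P {ω | x (X ω) = x i} := by
  calc ENNReal.ofReal (p i) = P (X ⁻¹' {i}) := by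
        rw [hX.measure_preimage (measurableSet_singleton i).nullMeasurableSet,
          PMF.toMeasure_apply_singleton _ _ (measurableSet_singleton i), pmfOfMemStdSimplex_apply]
    _ ≤ P {ω | x (X ω) = x i} := measure_mono fun ω hω => congrArg x hω

lemma integral_comp_eq_sum (hp : p ∈ stdSimplex ℝ ι)
    (hX : MeasurePreserving X P (pmfOfMemStdSimplex hp).toMeasure) (f : ι → ℝ) :
    ∫ ω, f (X ω) ∂P = ∑ i, p i * f i := by
  rw [← integral_pmfOfMemStdSimplex hp, ← hX.map_eq,
    integral_map hX.aemeasurable (measurable_of_finite f).aestronglyMeasurable]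

end RandomVariables

lemma exists_pair_of_mem_stdSimplex {ι : Type} [Fintype ι] {p q : ι → ℝ} (hp : p ∈ stdSimplex ℝ ι)
    (hq : q ∈ stdSimplex ℝ ι) (x : ι → ℝ) :
    ∃ (Ω : Type) (_ : MeasurableSpace Ω) (P : Measure Ω) (_ : IsProbabilityMeasure P)
      (U U' : Ω → ℝ), Measurable U ∧ Measurable U' ∧
      Set.range U ⊆ Set.range x ∧ Set.range U' ⊆ Set.range x ∧
      (∀ i, ENNReal.ofReal (p i) ≤ P {ω | U ω = x i}) ∧
      (∀ i, ENNReal.ofReal (q i) ≤ P {ω | U' ω = x i}) ∧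
      (∀ f : ℝ → ℝ, ∫ ω, f (U ω) ∂P = ∑ i, p i * f (x i)) ∧
      ∀ f : ℝ → ℝ, ∫ ω, f (U' ω) ∂P = ∑ i, q i * f (x i) := by
  let _ : MeasurableSpace ι := ⊤
  have hfst : MeasurePreserving Prod.fst
      ((pmfOfMemStdSimplex hp).toMeasure.prod (pmfOfMemStdSimplex hq).toMeasure) _ :=
    measurePreserving_fst
  have hsnd : MeasurePreserving Prod.snd
      ((pmfOfMemStdSimplex hp).toMeasure.prod (pmfOfMemStdSimplex hq).toMeasure) _ :=
    measurePreserving_snd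
  exact ⟨ι × ι, inferInstance, _, inferInstance, x ∘ Prod.fst, x ∘ Prod.snd,
    measurable_from_top.comp measurable_fst, measurable_from_top.comp measurable_snd,
    Set.range_comp_subset_range _ _, Set.range_comp_subset_range _ _,
    ofReal_le_measure_comp_eq hp hfst x, ofReal_le_measure_comp_eq hq hsnd x,
    fun f => integral_comp_eq_sum hp hfst (f ∘ x), fun f => integral_comp_eq_sum hq hsnd (f ∘ x)⟩

lemma exists_moment_matching_weights {δ : ℝ} (hδ₀ : 0 < δ) (hδ₁ : δ ≤ 1) (N : ℕ) :
    ∃ p ∈ stdSimplex ℝ (Fin 3 ⊕ Icc 1 N), ∃ q ∈ stdSimplex ℝ (Fin 3 ⊕ Icc 1 N),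
      1 - δ ^ 2 ≤ p (inl 1) ∧ 1 / 3 < q (inl 0) ∧ 1 / 3 < q (inl 2) ∧
      |∑ i, p i * augmentedNodes (squareNodes (10 / δ) N) i - 1| ≤ δ ∧
      ∀ t ≤ N + 1, ∑ i, p i * augmentedNodes (squareNodes (10 / δ) N) i ^ t =
        ∑ i, q i * augmentedNodes (squareNodes (10 / δ) N) i ^ t := by
  have hA : 10 ≤ 10 / δ := le_div_self (by norm_num) hδ₀ hδ₁
  set w := squareNodes (10 / δ) N
  have hw (j : Icc 1 N) : 10 ≤ w j := hA.trans (le_squareNodes (by positivity) j)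
  have hw₂ (j : Icc 1 N) : 2 < w j := by linarith [hw j]
  have hinv : ∑ j, (w j)⁻¹ ≤ 1 / 5 :=
    (sum_inv_squareNodes_le (by positivity)).trans (by field_simp; linarith)
  have htail : ∑ j, |signedWeight w (inr j)| ≤ 2 / 25 * δ ^ 2 :=
    (sum_abs_signedWeight_squareNodes_inr_le (by linarith)).trans_eq (by field_simp; norm_num)
  have htail_mul : ∑ j, |signedWeight w (inr j)| * w j ≤ 4 / 5 * δ :=
    (sum_abs_signedWeight_squareNodes_inr_mul_le (by linarith)).trans_eq (by field_simp; norm_num)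
  have hδ_sq : δ ^ 2 ≤ 1 := pow_le_one₀ hδ₀.le hδ₁
  have hu₀ : signedWeight w (inl 0) ≤ -(2 / 5) := by
    linarith [signedWeight_inl_zero_le fun j => (by linarith [hw j] : 1 ≤ w j)]
  have hu₁ : signedWeight w (inl 1) = 1 := signedWeight_inl_one fun j => by linarith [hw j]
  have hu₂ : signedWeight w (inl 2) ≤ -(1 / 2) := signedWeight_inl_two_le hw₂
  have hmoment {t : ℕ} (ht : t ≤ N + 1) : ∑ i, signedWeight w i * augmentedNodes w i ^ t = 0 :=
    sum_signedWeight_mul_augmentedNodes_pow (squareNodes_injective (by positivity)) hw₂ (by simpa)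
  have hsum : ∑ i, signedWeight w i = 0 := by simpa using hmoment (Nat.zero_le _)
  have hneg₀ : signedWeight w (inl 0) ≤ 0 := by linarith
  have hneg₂ : signedWeight w (inl 2) ≤ 0 := by linarith
  refine ⟨normalizedPosPart (signedWeight w),
    normalizedPosPart_mem_stdSimplex (hu₁.symm ▸ one_pos), normalizedPosPart (-signedWeight w),
    normalizedPosPart_mem_stdSimplex (i := inl 0) (by rw [Pi.neg_apply]; linarith),
    ?_, lt_normalizedPosPart_neg hneg₀ hu₁ hneg₂ hsum (by norm_num) (by linarith),
    lt_normalizedPosPart_neg hneg₀ hu₁ hneg₂ hsum (by norm_num) (by linarith), ?_,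
    fun t ht => (sum_normalizedPosPart_neg_mul hsum (hmoment ht)).symm⟩
  · linarith [one_sub_sum_abs_inr_le_normalizedPosPart hneg₀ hu₁ hneg₂, sq_nonneg δ]
  · linarith [abs_sum_normalizedPosPart_mul_augmentedNodes_sub_one_le hneg₀ hu₁ hneg₂
      fun j => (by linarith [hw j] : 1 ≤ w j)]

lemma measure_ne_le_of_ofReal_le_measure_eq {Ω β : Type*} [MeasurableSpace Ω] [MeasurableSpace β]
    [MeasurableSingletonClass β] {P : Measure Ω} [IsProbabilityMeasure P] {X : Ω → β}
    (hX : Measurable X) {a : β} {ε : ℝ} (h : ENNReal.ofReal (1 - ε) ≤ P {ω | X ω = a}) :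
    P {ω | X ω ≠ a} ≤ ENNReal.ofReal ε := by
  change P (X ⁻¹' {a})ᶜ ≤ _
  rw [prob_compl_eq_one_sub (hX (measurableSet_singleton a)), tsub_le_iff_right]
  calc (1 : ENNReal) = ENNReal.ofReal (ε + (1 - ε)) := by simp
    _ ≤ ENNReal.ofReal ε + ENNReal.ofReal (1 - ε) := ENNReal.ofReal_add_le
    _ ≤ ENNReal.ofReal ε + P {ω | X ω = a} := by gcongr

lemma exists_moment_matching_pair_of_scale {δ d : ℝ} (hδ₀ : 0 < δ) (hδ₁ : δ ≤ 1) (hd : 0 < d)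
    {N : ℕ} (hN : 1 ≤ N) :
    ∃ (Ω : Type) (_ : MeasurableSpace Ω) (P : Measure Ω) (_ : IsProbabilityMeasure P)
      (U U' : Ω → ℝ), Measurable U ∧ Measurable U' ∧
      (Set.range U).Finite ∧ (Set.range U').Finite ∧
      (∀ ω, U ω ∈ Set.Icc 0 (10 / δ * N ^ 2 / d)) ∧
      (∀ ω, U' ω ∈ Set.Icc 0 (10 / δ * N ^ 2 / d)) ∧
      P {ω | U ω ≠ 1 / d} ≤ ENNReal.ofReal (δ ^ 2) ∧
      ENNReal.ofReal (1 / 3) < P {ω | U' ω = 0} ∧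
      ENNReal.ofReal (1 / 3) < P {ω | U' ω = 2 / d} ∧
      |∫ ω, U ω ∂P - 1 / d| ≤ δ / d ∧
      ∀ t ≤ N + 1, ∫ ω, U ω ^ t ∂P = ∫ ω, U' ω ^ t ∂P := by
  obtain ⟨p, hp, q, hq, hp₁, hq₀, hq₂, hmean, hmoment⟩ := exists_moment_matching_weights hδ₀ hδ₁ N
  set v := augmentedNodes (squareNodes (10 / δ) N) with hv
  obtain ⟨Ω, mΩ, P, hP, U, U', hU, hU', hUrange, hU'range, hUatom, hU'atom, hUint, hU'int⟩ :=
    exists_pair_of_mem_stdSimplex hp hq (fun i => v i / d)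
  have hmem {y : ℝ} (hy : y ∈ Set.range fun i => v i / d) :
      y ∈ Set.Icc 0 (10 / δ * N ^ 2 / d) := by
    obtain ⟨i, rfl⟩ := hy
    have hA : 2 ≤ 10 / δ := by rw [le_div_iff₀ hδ₀]; linarith
    obtain ⟨hnonneg, hle⟩ := augmentedNodes_squareNodes_mem_Icc hA hN i
    exact ⟨div_nonneg hnonneg hd.le, div_le_div_of_nonneg_right hle hd.le⟩
  have hthird {a : ℝ} (ha : 1 / 3 < a) : ENNReal.ofReal (1 / 3) < ENNReal.ofReal a :=
    (ENNReal.ofReal_lt_ofReal_iff (by linarith)).2 ha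
  refine ⟨Ω, mΩ, P, hP, U, U', hU, hU', (Set.finite_range _).subset hUrange,
    (Set.finite_range _).subset hU'range, fun ω => hmem (hUrange ⟨ω, rfl⟩),
    fun ω => hmem (hU'range ⟨ω, rfl⟩), measure_ne_le_of_ofReal_le_measure_eq hU ?_,
    (hthird hq₀).trans_le ?_, (hthird hq₂).trans_le ?_, ?_, fun t ht => ?_⟩
  · simpa [hv, augmentedNodes] using (ENNReal.ofReal_le_ofReal hp₁).trans (hUatom (inl 1))
  · simpa [hv, augmentedNodes] using hU'atom (inl 0)
  · simpa [hv, augmentedNodes] using hU'atom (inl 2)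
  · rw [hUint fun y => y]
    simp only [mul_div_assoc', ← sum_div]
    rw [← sub_div, abs_div, abs_of_pos hd]
    gcongr
  · rw [hUint (· ^ t), hU'int (· ^ t)]
    simp only [div_pow, mul_div_assoc', ← sum_div, hmoment t ht]

lemma eventually_mul_log_sq_lt_sqrt (C : ℝ) :
    ∀ᶠ n : ℕ in Filter.atTop, 1 ≤ Real.log n ∧ C * Real.log n ^ 2 < √n := by
  have hlog : Filter.Tendsto (fun n : ℕ => Real.log n) Filter.atTop Filter.atTop :=
    Real.tendsto_log_atTop.comp tendsto_natCast_atTop_atTop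
  have hlittle := ((isLittleO_log_rpow_rpow_atTop 2 (by norm_num : (0 : ℝ) < 1 / 2)).comp_tendsto
    tendsto_natCast_atTop_atTop).const_mul_left C
  filter_upwards [hlog.eventually_ge_atTop 1, hlittle.def (one_half_pos (α := ℝ)),
    Filter.eventually_gt_atTop 0] with n hn hle hpos
  have hsqrt : 0 < √(n : ℝ) := Real.sqrt_pos.2 (mod_cast hpos)
  simp only [Function.comp_apply, Real.rpow_two, ← Real.sqrt_eq_rpow, Real.norm_eq_abs,
    abs_of_pos hsqrt] at hle
  exact ⟨hn, by linarith [le_abs_self (C * Real.log n ^ 2)]⟩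

lemma sqrt_div_mul_self {x y : ℝ} (hx : 0 ≤ x) : √(x / y) * y = √(x * y) := by
  rw [Real.sqrt_div hx, Real.sqrt_mul hx, div_mul_eq_mul_div, mul_div_assoc, Real.div_sqrt]

lemma mul_sqrt_sq_le_mul {γ x : ℝ} (hγ₀ : 0 ≤ γ) (hγ₁ : γ ≤ 1) (hx : 0 ≤ x) :
    (γ * √x) ^ 2 ≤ γ * x := by
  rw [mul_pow, Real.sq_sqrt hx]
  gcongr
  exact pow_le_of_le_one hγ₀ hγ₁ two_ne_zero

lemma div_sqrt_mul_lt_one {b x y : ℝ} (hx : 1 ≤ x) (hy : 0 < y) (hb : b < √y) :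
    b / √(x * y) < 1 := by
  rw [div_lt_one (Real.sqrt_pos.2 (mul_pos (one_pos.trans_le hx) hy))]
  exact hb.trans_le (Real.sqrt_le_sqrt (le_mul_of_one_le_left hy.le hx))

lemma div_mul_ceil_sq_div_le {γ x y L : ℝ} (hγ : 0 < γ) (hx : 0 < x) (hy : 0 < y) (hL : 1 ≤ L) :
    10 / (γ * √(x / y)) * ⌈L⌉₊ ^ 2 / y ≤ 40 / γ * L ^ 2 / √(x * y) := by
  have hceil : (⌈L⌉₊ : ℝ) ≤ 2 * L := by linarith [Nat.ceil_lt_add_one (by linarith : 0 ≤ L)]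
  calc 10 / (γ * √(x / y)) * ⌈L⌉₊ ^ 2 / y ≤ 10 / (γ * √(x / y)) * (2 * L) ^ 2 / y := by gcongr
    _ = 40 / γ * L ^ 2 / (√(x / y) * y) := by field_simp; ring
    _ = 40 / γ * L ^ 2 / √(x * y) := by rw [sqrt_div_mul_self hx.le]

/-- For every `γ ∈ (0,1)` there exist constants `c, c', c₀ > 0` and a
threshold `n₀` such that for all `1 ≤ k < n` with `n ≥ n₀`, there is a pair of finitely
supported random variables `U, U'` with values in `[0, 1)` satisfying:
(i) `Pr[U ≠ 1/n] ≤ γ k/n`; (ii) `Pr[U' = 0] > 1/3` and `Pr[U' = 2/n] > 1/3`;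
(iii) a.s. `U, U' ≤ c' (log n)²/√(kn)`; (iv) `E[U] = E[U']` and
`|E[U] - 1/n| ≤ c₀ √(k/n)/n`; (v) `E[U^t] = E[U'^t]` for all `1 ≤ t ≤ c log n`. -/
theorem exists_moment_matching_pair (γ : ℝ) (hγ0 : 0 < γ) (hγ1 : γ < 1) :
    ∃ c c' c₀ : ℝ, 0 < c ∧ 0 < c' ∧ 0 < c₀ ∧ ∃ n₀ : ℕ,
      ∀ k n : ℕ, 1 ≤ k → k < n → n₀ ≤ n →
        ∃ (Ω : Type) (mΩ : MeasurableSpace Ω) (P : Measure Ω)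
          (_ : IsProbabilityMeasure P) (U U' : Ω → ℝ),
          Measurable U ∧ Measurable U' ∧
          (Set.range U).Finite ∧ (Set.range U').Finite ∧
          (∀ ω, U ω ∈ Set.Ico (0 : ℝ) 1) ∧ (∀ ω, U' ω ∈ Set.Ico (0 : ℝ) 1) ∧
          P {ω | U ω ≠ 1 / n} ≤ ENNReal.ofReal (γ * k / n) ∧
          ENNReal.ofReal (1 / 3) < P {ω | U' ω = 0} ∧
          ENNReal.ofReal (1 / 3) < P {ω | U' ω = 2 / n} ∧
          (∀ᵐ ω ∂P, U ω ≤ c' * (Real.log n) ^ 2 / Real.sqrt ((k : ℝ) * n)) ∧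
          (∀ᵐ ω ∂P, U' ω ≤ c' * (Real.log n) ^ 2 / Real.sqrt ((k : ℝ) * n)) ∧
          (∫ ω, U ω ∂P) = (∫ ω, U' ω ∂P) ∧
          |(∫ ω, U ω ∂P) - 1 / n| ≤ c₀ * Real.sqrt ((k : ℝ) / n) / n ∧
          (∀ t : ℕ, 1 ≤ t → (t : ℝ) ≤ c * Real.log n →
            (∫ ω, (U ω) ^ t ∂P) = ∫ ω, (U' ω) ^ t ∂P) := by
  obtain ⟨n₀, hn₀⟩ := Filter.eventually_atTop.1 (eventually_mul_log_sq_lt_sqrt (40 / γ))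
  refine ⟨1, 40 / γ, 1, one_pos, by positivity, one_pos, n₀, fun k n hk hkn hn => ?_⟩
  obtain ⟨hlog, hsmall⟩ := hn₀ n hn
  have hk₁ : (1 : ℝ) ≤ k := mod_cast hk
  have hn_pos : (0 : ℝ) < n := mod_cast (Nat.zero_le k).trans_lt hkn
  have hratio : √((k : ℝ) / n) ≤ 1 :=
    Real.sqrt_le_one.2 ((div_le_one hn_pos).2 (mod_cast hkn.le))
  have hδ_sq : (γ * √((k : ℝ) / n)) ^ 2 ≤ γ * k / n :=
    (mul_sqrt_sq_le_mul hγ0.le hγ1.le (by positivity)).trans_eq (mul_div_assoc _ _ _).symm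
  have hbound := div_mul_ceil_sq_div_le hγ0 (one_pos.trans_le hk₁) hn_pos hlog
  have hlt_one : 40 / γ * Real.log n ^ 2 / √((k : ℝ) * n) < 1 :=
    div_sqrt_mul_lt_one hk₁ hn_pos hsmall
  obtain ⟨Ω, mΩ, P, hP, U, U', hU, hU', hUfin, hU'fin, hUmem, hU'mem, hne, h₀, h₂, hmean,
      hmoment⟩ :=
    exists_moment_matching_pair_of_scale (δ := γ * √((k : ℝ) / n)) (by positivity)
      (mul_le_one₀ hγ1.le (by positivity) hratio) hn_pos (Nat.ceil_pos.2 (one_pos.trans_le hlog))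
  refine ⟨Ω, mΩ, P, hP, U, U', hU, hU', hUfin, hU'fin,
    fun ω => ⟨(hUmem ω).1, ((hUmem ω).2.trans hbound).trans_lt hlt_one⟩,
    fun ω => ⟨(hU'mem ω).1, ((hU'mem ω).2.trans hbound).trans_lt hlt_one⟩,
    hne.trans (ENNReal.ofReal_le_ofReal hδ_sq), h₀, h₂,
    .of_forall fun ω => (hUmem ω).2.trans hbound, .of_forall fun ω => (hU'mem ω).2.trans hbound,
    by simpa using hmoment 1 (by omega), hmean.trans (by gcongr), fun t _ ht => hmoment t ?_⟩
  exact (Nat.cast_le.1 ((one_mul (Real.log n) ▸ ht).trans (Nat.le_ceil _))).trans (Nat.le_succ _)
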